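/- Right multiplication by a unit octonion parallelizes the 7-sphere: let x be an octonion with N(x) = 1. Then for the seven imaginary units e₁,…,e₇ and all i, j ∈ {1,…,7}: B(eᵢ·x, x) = 0 and B(eᵢ·x, eⱼ·x) = δᵢⱼ; consequently {x, e₁·x, …, e₇·x} is an orthonormal basis of the octonions viewed as the 8-dimensional real inner product space with quadratic form N. -/

import Mathlib

/-- The octonions, realized via the Cayley–Dickson construction as pairs of
real quaternions. -/
abbrev Octonion : Type := Quaternion ℝ × Quaternion ℝ

/-- Cayley–Dickson multiplication: `(a,b)·(c,d) = (a c − d̄ b, d a + b c̄)`. -/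
noncomputable def octMul (x y : Octonion) : Octonion :=
  (x.1 * y.1 - star y.2 * x.2, y.2 * x.1 + x.2 * star y.1)

/-- The octonionic norm: `N (a,b) = ‖a‖² + ‖b‖²` (sum of quaternionic
norm-squares). -/
noncomputable def octN (x : Octonion) : ℝ :=
  Quaternion.normSq x.1 + Quaternion.normSq x.2

/-- The bilinear form associated with the octonionic norm. -/
noncomputable def octB (u v : Octonion) : ℝ :=
  (octN (u + v) - octN u - octN v) / 2

/-- The seven imaginary units of the octonions:
`e₁ = (i,0)`, `e₂ = (j,0)`, `e₃ = (k,0)`, `e₄ = (0,1)`, `e₅ = (0,i)`,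
`e₆ = (0,j)`, `e₇ = (0,k)`. -/
noncomputable def octUnit : Fin 7 → Octonion :=
  ![((⟨0, 1, 0, 0⟩ : Quaternion ℝ), 0),
    ((⟨0, 0, 1, 0⟩ : Quaternion ℝ), 0),
    ((⟨0, 0, 0, 1⟩ : Quaternion ℝ), 0),
    (0, 1),
    (0, (⟨0, 1, 0, 0⟩ : Quaternion ℝ)),
    (0, (⟨0, 0, 1, 0⟩ : Quaternion ℝ)),
    (0, (⟨0, 0, 0, 1⟩ : Quaternion ℝ))]

theorem oct_q0 : (0 : Quaternion ℝ) = ⟨0, 0, 0, 0⟩ := rfl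

theorem oct_q1 : (1 : Quaternion ℝ) = ⟨1, 0, 0, 0⟩ := rfl

theorem octB_eq (u v : Octonion) : octB u v =
    u.1.re * v.1.re + u.1.imI * v.1.imI + u.1.imJ * v.1.imJ + u.1.imK * v.1.imK +
    (u.2.re * v.2.re + u.2.imI * v.2.imI + u.2.imJ * v.2.imJ + u.2.imK * v.2.imK) := by
  simp only [octB, octN, Quaternion.normSq_def', Prod.fst_add, Prod.snd_add,
    Quaternion.re_add, Quaternion.imI_add, Quaternion.imJ_add, Quaternion.imK_add]
  ring

theorem octB_comm (u v : Octonion) : octB u v = octB v u := by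
  simp only [octB_eq]; ring

theorem octB_mul (a b x : Octonion) :
    octB (octMul a x) (octMul b x) = octB a b * octN x := by
  simp only [octB_eq, octMul, octN, Quaternion.normSq_def',
    Quaternion.re_add, Quaternion.imI_add, Quaternion.imJ_add, Quaternion.imK_add,
    Quaternion.re_sub, Quaternion.imI_sub, Quaternion.imJ_sub, Quaternion.imK_sub,
    Quaternion.re_mul, Quaternion.imI_mul, Quaternion.imJ_mul, Quaternion.imK_mul,
    Quaternion.re_star, Quaternion.imI_star, Quaternion.imJ_star, Quaternion.imK_star]
  ring

theorem octMul_one_left (x : Octonion) : octMul (1, 0) x = x := by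
  simp [octMul]

theorem octB_unit_one (i : Fin 7) : octB (octUnit i) (1, 0) = 0 := by
  fin_cases i <;> simp [octB_eq, octUnit, oct_q0, oct_q1]

theorem octB_unit_unit (i j : Fin 7) :
    octB (octUnit i) (octUnit j) = if i = j then 1 else 0 := by
  fin_cases i <;> fin_cases j <;> simp [octB_eq, octUnit, oct_q0, oct_q1]

noncomputable def octBL (w : Octonion) : Octonion →ₗ[ℝ] ℝ where
  toFun u := octB u w
  map_add' u v := by
    simp only [octB_eq, Prod.fst_add, Prod.snd_add,
      Quaternion.re_add, Quaternion.imI_add, Quaternion.imJ_add, Quaternion.imK_add]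
    ring
  map_smul' c u := by
    simp only [octB_eq, Prod.smul_fst, Prod.smul_snd, Quaternion.re_smul, Quaternion.imI_smul,
      Quaternion.imJ_smul, Quaternion.imK_smul, smul_eq_mul, RingHom.id_apply]
    ring

/-- Right multiplication by a unit octonion parallelizes the 7-sphere: if
`N(x) = 1`, the seven vectors `eᵢ·x` are orthogonal to `x` and orthonormal
among themselves; consequently `{x, e₁·x, …, e₇·x}` is an orthonormal basis of
the octonions viewed as the 8-dimensional real inner product space with
quadratic form `N`. -/
theorem octonion_parallelization (x : Octonion) (hx : octN x = 1)
    (v : Fin 8 → Octonion) (hv0 : v 0 = x)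
    (hvs : ∀ i : Fin 7, v i.succ = octMul (octUnit i) x) :
    ((∀ i : Fin 7, octB (octMul (octUnit i) x) x = 0) ∧
     (∀ i j : Fin 7, octB (octMul (octUnit i) x) (octMul (octUnit j) x) =
        if i = j then 1 else 0)) ∧
    (∀ i j : Fin 8, octB (v i) (v j) = if i = j then 1 else 0) ∧
    Submodule.span ℝ (Set.range v) = ⊤ := by
  have h1 : ∀ i : Fin 7, octB (octMul (octUnit i) x) x = 0 := by
    intro i
    have h := octB_mul (octUnit i) (1, 0) x
    rwa [octMul_one_left, octB_unit_one, zero_mul] at h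
  have h2 : ∀ i j : Fin 7, octB (octMul (octUnit i) x) (octMul (octUnit j) x) =
      if i = j then 1 else 0 := by
    intro i j
    rw [octB_mul, hx, mul_one, octB_unit_unit]
  have h3 : ∀ i j : Fin 8, octB (v i) (v j) = if i = j then 1 else 0 := by
    intro i j
    induction i using Fin.cases with
    | zero =>
      induction j using Fin.cases with
      | zero =>
        have h := octB_mul (1, 0) (1, 0) x
        rw [octMul_one_left, hx] at h
        rw [hv0, h]
        simp [octB_eq, oct_q0, oct_q1]
      | succ j =>
        rw [hv0, hvs, octB_comm, h1, if_neg (Fin.succ_ne_zero j).symm]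
    | succ i =>
      induction j using Fin.cases with
      | zero => rw [hv0, hvs, h1, if_neg (Fin.succ_ne_zero i)]
      | succ j => rw [hvs, hvs, h2]; simp only [Fin.succ_inj]
  refine ⟨⟨h1, h2⟩, h3, ?_⟩
  have hli : LinearIndependent ℝ v := by
    rw [Fintype.linearIndependent_iff]
    intro g hg j
    have h := congrArg (octBL (v j)) hg
    rw [map_sum, map_zero] at h
    have e : ∀ i, octBL (v j) (g i • v i) = g i * (if i = j then 1 else 0) := by
      intro i
      rw [map_smul, smul_eq_mul, ← h3 i j]
      rfl
    simpa [e] using h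
  apply hli.span_eq_top_of_card_eq_finrank'
  rw [Module.finrank_prod, Quaternion.finrank_eq_four]
  simp
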